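/- arXiv:2309.10377 — 2 statements merged into one kernel-verified Lean document; each statement's English description precedes it below -/
import Mathlib

section
/- Let D = (V, A) be a directed graph with nonnegative arc costs c, let s, t ∈ V, and let p be a shortest simple s-t-path with ℓ arcs. Suppose q is a simple s-t-path with γ_{p,2}(q) < ℓ that is efficient with respect to γ_p and whose γ_p-cost is lexicographically smallest among all efficient simple s-t-paths q' with γ_{p,2}(q') < ℓ. Then q is a second shortest simple s-t-path: q ≠ p and c(q) ≤ c(r) for every simple s-t-path r ≠ p. -/
/-- The arcs of a walk, given as the list of consecutive vertex pairs. -/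
def arcsOf {V : Type*} (q : List V) : List (V × V) := q.zip q.tail

/-- `q` is a walk (a finite sequence of consecutive arcs, possibly repeating
nodes) from `s` to `t` in the digraph on `V` with arc relation `A`. -/
def IsDiWalk {V : Type*} (A : V → V → Prop) (s t : V) (q : List V) : Prop :=
  q ≠ [] ∧ q.head? = some s ∧ q.getLast? = some t ∧ q.Chain' A

/-- `q` is a simple path from `s` to `t`: a walk visiting no node twice. -/
def IsDiPath {V : Type*} (A : V → V → Prop) (s t : V) (q : List V) : Prop :=
  IsDiWalk A s t q ∧ q.Nodup

/-- The cost of a walk: the sum of the costs of its arcs. -/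
def pathCost {V : Type*} (c : V → V → NNReal) (q : List V) : NNReal :=
  ((arcsOf q).map fun e => c e.1 e.2).sum

/-- Second component `γ_{p,2}` of the biobjective cost: the number of arcs of
`q` (with multiplicity along `q`) that are arcs of `p`. -/
def gammaTwo {V : Type*} [DecidableEq V] (p q : List V) : ℕ :=
  ((arcsOf q).filter fun e => decide (e ∈ arcsOf p)).length

/-- `q` dominates `q'` w.r.t. the biobjective cost `γ_p = (pathCost c ·, gammaTwo p ·)`. -/
def DominatesBi {V : Type*} [DecidableEq V] (c : V → V → NNReal) (p q q' : List V) : Prop :=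
  pathCost c q ≤ pathCost c q' ∧ gammaTwo p q ≤ gammaTwo p q' ∧
    (pathCost c q < pathCost c q' ∨ gammaTwo p q < gammaTwo p q')

/-- A simple `s`-`t`-path is efficient w.r.t. `γ_p` if no simple `s`-`t`-path dominates it. -/
def EfficientPath {V : Type*} [DecidableEq V] (A : V → V → Prop) (c : V → V → NNReal)
    (s t : V) (p q : List V) : Prop :=
  IsDiPath A s t q ∧ ∀ r, IsDiPath A s t r → ¬ DominatesBi c p r q

/-- `p` is a shortest simple `s`-`t`-path w.r.t. `c`. -/
def IsShortestPath {V : Type*} (A : V → V → Prop) (c : V → V → NNReal)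
    (s t : V) (p : List V) : Prop :=
  IsDiPath A s t p ∧ ∀ r, IsDiPath A s t r → pathCost c p ≤ pathCost c r

/-- `p₂` is a second shortest simple `s`-`t`-path (w.r.t. the shortest path `p₁`). -/
def IsSecondShortestPath {V : Type*} (A : V → V → Prop) (c : V → V → NNReal)
    (s t : V) (p₁ p₂ : List V) : Prop :=
  IsDiPath A s t p₂ ∧ p₂ ≠ p₁ ∧
    ∀ r, IsDiPath A s t r → r ≠ p₁ → pathCost c p₂ ≤ pathCost c r

theorem arcsOf_cons_cons {V : Type*} (a b : V) (l : List V) :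
    arcsOf (a :: b :: l) = (a, b) :: arcsOf (b :: l) := rfl

theorem fst_mem_of_mem_arcsOf {V : Type*} {q : List V} {e : V × V} (he : e ∈ arcsOf q) :
    e.1 ∈ q :=
  (List.of_mem_zip (a := e.1) (b := e.2) he).1

theorem List.Nodup.arcsOf {V : Type*} {q : List V} (hq : q.Nodup) : (arcsOf q).Nodup := by
  refine List.Nodup.of_map Prod.snd ?_
  rw [_root_.arcsOf, List.map_snd_zip (by simp)]
  exact hq.tail

theorem gammaTwo_self {V : Type*} [DecidableEq V] (p : List V) :
    gammaTwo p p = (arcsOf p).length := by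
  simp [gammaTwo]

/-- A simple path is determined by its endpoints among the simple paths using all of its arcs. -/
theorem eq_of_arcsOf_subset {V : Type*} {p r : List V} (hp : p.Nodup) (hr : r.Nodup)
    (hp₀ : p ≠ []) (hhead : p.head? = r.head?) (hlast : p.getLast? = r.getLast?)
    (hsub : arcsOf p ⊆ arcsOf r) : p = r := by
  induction p generalizing r with
  | nil => exact absurd rfl hp₀
  | cons a p ih =>
    obtain _ | ⟨a', r⟩ := r
    · simp at hhead
    obtain rfl : a = a' := by simpa using hhead
    obtain _ | ⟨b, p⟩ := p
    · obtain _ | ⟨b', r⟩ := r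
      · rfl
      · rw [List.getLast?_cons_cons] at hlast
        exact absurd (List.mem_of_getLast? hlast.symm) (List.nodup_cons.1 hr).1
    · obtain _ | ⟨b', r⟩ := r
      · exact absurd (hsub (List.mem_cons_self (a := (a, b)))) (by simp [arcsOf])
      have har := (List.nodup_cons.1 hr).1
      have hap := (List.nodup_cons.1 hp).1
      rw [arcsOf_cons_cons, arcsOf_cons_cons] at hsub
      obtain rfl : b = b' := by
        rcases List.mem_cons.1 (hsub List.mem_cons_self) with h | h
        · exact congrArg Prod.snd h
        · exact absurd (fst_mem_of_mem_arcsOf h) har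
      rw [ih (List.nodup_cons.1 hp).2 (List.nodup_cons.1 hr).2 (by simp) rfl
        (by simpa only [List.getLast?_cons_cons] using hlast)]
      intro e he
      rcases List.mem_cons.1 (hsub (List.mem_cons_of_mem _ he)) with rfl | h
      · exact absurd (fst_mem_of_mem_arcsOf he) hap
      · exact h

/-- Every simple path other than `p` misses an arc of `p`. -/
theorem gammaTwo_lt_length_arcsOf {V : Type*} [DecidableEq V] {A : V → V → Prop} {s t : V}
    {p r : List V} (hp : IsDiPath A s t p) (hr : IsDiPath A s t r) (hne : r ≠ p) :
    gammaTwo p r < (arcsOf p).length := by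
  by_contra! hle
  obtain ⟨⟨hp₀, hps, hpt, -⟩, hpn⟩ := hp
  obtain ⟨⟨-, hrs, hrt, -⟩, hrn⟩ := hr
  have hsubperm : ((arcsOf r).filter fun e => decide (e ∈ arcsOf p)).Subperm (arcsOf p) :=
    List.subperm_of_subset (hrn.arcsOf.filter _) fun e he => by
      simpa using (List.mem_filter.1 he).2
  have hperm := hsubperm.perm_of_length_le hle
  exact hne (eq_of_arcsOf_subset hpn hrn hp₀ (hps.trans hrs.symm) (hpt.trans hrt.symm)
    fun e he => (List.mem_filter.1 (hperm.mem_iff.2 he)).1).symm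

/-- Over a finite node set, every simple path is weakly dominated by an efficient one. -/
theorem exists_efficientPath_le {V : Type*} [Finite V] [DecidableEq V] {A : V → V → Prop}
    (c : V → V → NNReal) {s t : V} (p : List V) {r : List V} (hr : IsDiPath A s t r) :
    ∃ m, EfficientPath A c s t p m ∧ pathCost c m ≤ pathCost c r ∧
      gammaTwo p m ≤ gammaTwo p r := by
  have := Fintype.ofFinite V
  have hfin : {u : List V | IsDiPath A s t u ∧ pathCost c u ≤ pathCost c r ∧
      gammaTwo p u ≤ gammaTwo p r}.Finite :=
    (List.finite_length_le V (Fintype.card V)).subset fun u hu => hu.1.2.length_le_card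
  obtain ⟨m, ⟨hm, hmc, hmg⟩, hmin⟩ := Set.exists_min_image _
    (fun u => pathCost c u + (gammaTwo p u : NNReal)) hfin ⟨r, hr, le_rfl, le_rfl⟩
  refine ⟨m, ⟨hm, fun u hu ⟨hc, hg, hlt⟩ => ?_⟩, hmc, hmg⟩
  refine (hmin u ⟨hu, hc.trans hmc, hg.trans hmg⟩).not_gt ?_
  rcases hlt with hlt | hlt
  · exact add_lt_add_of_lt_of_le hlt (Nat.cast_le.2 hg)
  · exact add_lt_add_of_le_of_lt hc (Nat.cast_lt.2 hlt)

/-- If `p` is a shortest simple `s`-`t`-path with `ℓ` arcs and `q` is an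
efficient simple `s`-`t`-path with `γ_{p,2}(q) < ℓ` whose `γ_p`-cost is lexicographically
smallest among all such efficient paths, then `q` is a second shortest simple `s`-`t`-path. -/
theorem lexSmallestEfficient_isSecondShortest {V : Type*} [Fintype V] [DecidableEq V]
    (A : V → V → Prop) (c : V → V → NNReal) (s t : V) (p : List V) (ℓ : ℕ)
    (hp : IsShortestPath A c s t p) (hℓ : (arcsOf p).length = ℓ)
    (q : List V) (hq : EfficientPath A c s t p q) (hq2 : gammaTwo p q < ℓ)
    (hlex : ∀ q', EfficientPath A c s t p q' → gammaTwo p q' < ℓ →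
      pathCost c q < pathCost c q' ∨
        (pathCost c q = pathCost c q' ∧ gammaTwo p q ≤ gammaTwo p q')) :
    q ≠ p ∧ ∀ r, IsDiPath A s t r → r ≠ p → pathCost c q ≤ pathCost c r := by
  subst hℓ
  refine ⟨?_, fun r hr hne => ?_⟩
  · rintro rfl
    exact hq2.ne (gammaTwo_self q)
  · obtain ⟨m, hm, hmc, hmg⟩ := exists_efficientPath_le c p hr
    have hle : pathCost c q ≤ pathCost c m :=
      (hlex m hm (hmg.trans_lt (gammaTwo_lt_length_arcsOf hp.1 hr hne))).elim le_of_lt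
        fun h => h.1.le
    exact hle.trans hmc
end

section
/- Let D = (V, A) be a directed graph with nonnegative arc costs c, let p₁ be a shortest simple s-t-path, and let p₂ be a second shortest simple s-t-path. Write p₂ = p₁[s..v] ∘ (v,w) ∘ p₂[w..t], where p₁[s..v] is the longest common prefix of p₂ and p₁ and (v,w) is the first arc of p₂ after this prefix (so (v,w) is not an arc of p₁). Then the suffix p₂[w..t] is a shortest w-t-path in the graph obtained from D by deleting all nodes of the prefix p₂[s..v] = p₁[s..v] together with their incident arcs: for every simple w-t-path r in D avoiding all nodes of p₁[s..v], c(p₂[w..t]) ≤ c(r). -/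
/-- The cost of a walk splits at any of its nodes. -/
theorem pathCost_append_cons {V : Type*} (c : V → V → NNReal) (p : List V) (w : V) (q : List V) :
    pathCost c (p ++ w :: q) = pathCost c (p ++ [w]) + pathCost c (w :: q) := by
  induction p with
  | nil => simp [pathCost, arcsOf]
  | cons a p ih => cases p <;> simp_all [pathCost, arcsOf, add_assoc]

/-- Replacing the part of a simple path after a node `w` by a simple `w`-`t`-path that avoids the
nodes before `w` yields a simple path. -/
theorem IsDiPath.replace_suffix {V : Type*} {A : V → V → Prop} {s t w : V} {p q q' : List V}
    (h : IsDiPath A s t (p ++ w :: q)) (h' : IsDiPath A w t (w :: q'))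
    (hdisj : ∀ x ∈ p, x ∉ w :: q') : IsDiPath A s t (p ++ w :: q') := by
  obtain ⟨⟨-, hhead, -, hchain⟩, hnodup⟩ := h
  obtain ⟨⟨-, -, hlast', hchain'⟩, hnodup'⟩ := h'
  refine ⟨⟨by simp, ?_, ?_, ?_⟩, ?_⟩
  · cases p <;> simpa using hhead
  · rw [List.getLast?_append, hlast', Option.some_or]
  · exact List.isChain_split.2 ⟨(List.isChain_split.1 hchain).1, hchain'⟩
  · exact List.nodup_append'.2 ⟨(List.nodup_append'.1 hnodup).1, hnodup', hdisj⟩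

/-- Let `p₁` be a shortest and `p₂` a second shortest simple `s`-`t`-path,
and write `p₂ = pre ++ w :: suf` where `pre = p₁[s..v] = p₂[s..v]` is the longest common
prefix of `p₂` and `p₁` (so `pre` ends at the deviation node `v` and `(v,w)` is the
deviation arc). Then the suffix `w :: suf = p₂[w..t]` is a shortest `w`-`t`-path among the
simple `w`-`t`-paths avoiding all nodes of the prefix. -/
theorem secondShortest_suffix_shortest {V : Type*}
    (A : V → V → Prop) (c : V → V → NNReal) (s t : V) (p₁ p₂ : List V)
    (hp₁ : IsShortestPath A c s t p₁)
    (hp₂ : IsSecondShortestPath A c s t p₁ p₂)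
    (pre : List V) (v w : V) (suf : List V)
    (hsplit : p₂ = pre ++ w :: suf)
    (hv : pre.getLast? = some v)
    (hpre : pre <+: p₁)
    (hlongest : ¬ (pre ++ [w]) <+: p₁) :
    ∀ r, IsDiPath A w t r → (∀ x ∈ pre, x ∉ r) →
      pathCost c (w :: suf) ≤ pathCost c r := by
  intro r hr hdisj
  obtain ⟨r', rfl⟩ : ∃ r', r = w :: r' := List.head?_eq_some_iff.1 hr.1.2.1
  subst hsplit
  have hne : pre ++ w :: r' ≠ p₁ := by
    rintro rfl
    exact hlongest ⟨r', by simp⟩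
  have hle := hp₂.2.2 _ (hp₂.1.replace_suffix hr hdisj) hne
  rw [pathCost_append_cons c pre w suf, pathCost_append_cons c pre w r'] at hle
  exact le_of_add_le_add_left hle
end
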